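/- Let m ≥ 1, n ≥ 1 be integers and μ ∈ ℝ, and set T̂_{m,n}^{(μ)}(z) = T_{m,n}^{(μ)}(−z). Then the rational function ŵ_{m,n}(z; μ) = T̂_{m−1,n}^{(μ)}(z) · T̂_{m−1,n+1}^{(μ)}(z) / (T̂_{m,n}^{(μ)}(z) · T̂_{m−2,n+1}^{(μ)}(z)) is a solution of P_V with parameters α = m²/2, β = −(m+2n+1+μ)²/2, γ = −μ; moreover ŵ_{m,n}(z; μ) = w_{m,n}(−z; μ) where w_{m,n}(z; μ) = T_{m−1,n}^{(μ)}(z) T_{m−1,n+1}^{(μ)}(z)/(T_{m,n}^{(μ)}(z) T_{m−2,n+1}^{(μ)}(z)). -/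

import Mathlib

noncomputable section

open Finset

/-- Generalized binomial coefficient `C(x, k)` for real `x`. -/
def genBinom (x : ℝ) (k : ℕ) : ℝ :=
  (∏ i ∈ Finset.range k, (x - i)) / (Nat.factorial k)

/-- Associated Laguerre polynomial `L_n^{(α)}(z)`, with the convention `L_n^{(α)} = 0` for `n < 0`. -/
def lagL (n : ℤ) (α : ℝ) : ℝ → ℝ := fun z =>
  if n < 0 then 0
  else ∑ k ∈ Finset.range (n.toNat + 1),
    (-1 : ℝ) ^ k * genBinom ((n : ℝ) + α) (n.toNat - k) * z ^ k / (Nat.factorial k)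

/-- Generalised Laguerre polynomial
`T_{m,n}^{(μ)}(z) = det[(d/dz)^{j+k} L_{m+n}^{(μ+1)}(z)]_{j,k=0}^{n-1}`
(with `T_{m,0}^{(μ)} = 1`, the empty determinant). -/
def genLag (m : ℤ) (n : ℕ) (μ : ℝ) : ℝ → ℝ := fun z =>
  Matrix.det (Matrix.of fun j k : Fin n =>
    iteratedDeriv ((j : ℕ) + (k : ℕ)) (lagL (m + n) (μ + 1)) z)

/-- Wronskian `Wr(f_1, …, f_r)(z) = det[(d/dz)^{j-1} f_k(z)]`. -/
def wronskian {r : ℕ} (f : Fin r → ℝ → ℝ) : ℝ → ℝ := fun z =>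
  Matrix.det (Matrix.of fun j k : Fin r => iteratedDeriv (j : ℕ) (f k) z)

/-- The constant `c_{m,n} = (-1)^{n(2m+1+n)/2} ∏_{j=1}^n (j-1)!/(m+j)!`. -/
def cmn (m n : ℕ) : ℝ :=
  (-1 : ℝ) ^ (n * (2 * m + 1 + n) / 2) *
    ∏ j ∈ Finset.range n, (Nat.factorial j : ℝ) / (Nat.factorial (m + j + 1))

/-- `τ_{m,n}^{(μ)}(z) = det[(z d/dz)^{j+k} L_{m+n}^{(n+μ)}(z)]_{j,k=0}^{n-1}`. -/
def tauP (m : ℤ) (n : ℕ) (μ : ℝ) : ℝ → ℝ := fun z =>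
  Matrix.det (Matrix.of fun j k : Fin n =>
    ((fun (g : ℝ → ℝ) => fun t => t * deriv g t)^[(j : ℕ) + (k : ℕ)]
      (lagL (m + n) ((n : ℝ) + μ))) z)

/-- Hirota bilinear operator `D_z(f • g) = f' g - f g'`. -/
def hirota (f g : ℝ → ℝ) (z : ℝ) : ℝ := deriv f z * g z - f z * deriv g z

/-- Probabilists' Hermite polynomial `He_n` as a real function. -/
def He (n : ℕ) : ℝ → ℝ := fun z => Polynomial.aeval z (Polynomial.hermite n)

/-- The fifth Painlevé equation (with `δ = -1/2`) for `w` with parameters `(a, b, c)`,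
holding at the point `z`. -/
def PV (a b c : ℝ) (w : ℝ → ℝ) (z : ℝ) : Prop :=
  iteratedDeriv 2 w z =
    (1 / (2 * w z) + 1 / (w z - 1)) * (deriv w z) ^ 2
      - (1 / z) * deriv w z
      + (w z - 1) ^ 2 * (a * (w z) ^ 2 + b) / (z ^ 2 * w z)
      + c * w z / z
      - w z * (w z + 1) / (2 * (w z - 1))

/-- The Jimbo–Miwa–Okamoto `σ`-equation `S_V` with parameters `(ν₁, ν₂, ν₃)`,
holding at the point `z`. -/
def SV (ν₁ ν₂ ν₃ : ℝ) (σ : ℝ → ℝ) (z : ℝ) : Prop :=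
  (z * iteratedDeriv 2 σ z) ^ 2 =
    (2 * (deriv σ z) ^ 2 + (ν₁ + ν₂ + ν₃ - z) * deriv σ z + σ z) ^ 2
      - 4 * deriv σ z * (deriv σ z + ν₁) * (deriv σ z + ν₂) * (deriv σ z + ν₃)


lemma step_dS {K : Type*} [Field K] (z v ρ m B b dρ κ lam Nn V S s1 : K)
  (hv : v ≠ 0) (hκ : κ ≠ 0) (hl : lam ≠ 0) (hN0 : Nn ≠ 0)
  (hdρ : dρ = -ρ*κ/v-z*v*(ρ-b))
  (hκd : κ = ρ - m) (hld : lam = κ - z*v)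
  (hN : Nn = -κ*(ρ-B-1)+z*v*(ρ-b))
  (hV : V = v * Nn/(κ*lam) - 1)
  (hs1 : s1 = ((B+1)*κ-Nn)*lam/(v*Nn))
  (hS : S = (B+1) - Nn/κ - s1) :
  V * (-(Nn/κ)*(s1 - ρ/v - dρ/κ) - ((-(Nn/κ)*(s1 - ρ/v - dρ/κ))/(1+V)
    - ((B+1) - Nn/κ)*(-(1+V)*(2*S-z*V)+((B+1)+(m-1))*V+(m-1))/(1+V)^2))
   = -S*(S-(m-1))-z*V^2*(S-b) := by
  have hz : z = (κ - lam)/v := by rw [hld]; field_simp; ring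
  have hρ : ρ = κ + m := by rw [hκd]; ring
  have hV1 : 1 + V = v * Nn/(κ*lam) := by rw [hV]; ring
  rw [hV1]
  subst hV hS hs1 hdρ
  clear hκd
  subst hρ
  rw [hz] at hN ⊢
  clear hz hld hV1
  field_simp
  field_simp at hN
  subst hN
  ring

lemma step_bf {K : Type*} [Field K] (z v ρ m B b κ lam Nn V S s1 : K)
  (hv : v ≠ 0) (hκ : κ ≠ 0) (hl : lam ≠ 0) (hN0 : Nn ≠ 0)
  (hκd : κ = ρ - m) (hld : lam = κ - z*v)
  (hN : Nn = -κ*(ρ-B-1)+z*v*(ρ-b))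
  (hV : V = v * Nn/(κ*lam) - 1)
  (hs1 : s1 = ((B+1)*κ-Nn)*lam/(v*Nn))
  (hS : S = (B+1) - Nn/κ - s1) :
  S = V * s1 ∧ 
  Nn = -(((1+V)*s1)-((m-1)+1))*((1+V)*s1-(B+1))+ (1+V)*z*((1+V)*s1-b) := by
  have hz : z = (κ - lam)/v := by rw [hld]; field_simp; ring
  have hρ : ρ = κ + m := by rw [hκd]; ring
  have hV1 : 1 + V = v * Nn/(κ*lam) := by rw [hV]; ring
  have h1 : (1+V)*s1 = B+1-Nn/κ := by
    rw [hV1, hs1]; field_simp; 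
  refine ⟨by rw [hS, ← h1]; ring, ?_⟩
  rw [h1, hV1]
  clear hκd
  subst hρ
  rw [hz] at hN ⊢
  clear hz hld hV1
  field_simp
  field_simp at hN
  subst hN
  ring

lemma step_bg {K : Type*} [Field K] (z v ρ m B b N κ lam Nn V S s1 : K)
  (hv : v ≠ 0) (hκ : κ ≠ 0) (hl : lam ≠ 0) (hN0 : Nn ≠ 0)
  (hκd : κ = ρ - m) (hld : lam = κ - z*v) (hNb : N + b = m + B)
  (hN : Nn = -κ*(ρ-B-1)+z*v*(ρ-b))
  (hV : V = v * Nn/(κ*lam) - 1) 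
  (hs1 : s1 = ((B+1)*κ-Nn)*lam/(v*Nn))
  (hS : S = (B+1) - Nn/κ - s1) :
  (1+v)/v^2 * (v*Nn - κ * lam) = -(S-((m-1)+(B+1)*V/(1+V))+(B+1)-1)*(S-((m-1)+(B+1)*V/(1+V))+(m-1))+V*z*(S-((m-1)+(B+1)*V/(1+V))+N) := by
  have hz : z = (κ - lam)/v := by rw [hld]; field_simp; ring
  have hρ : ρ = κ + m := by rw [hκd]; ring
  have hV1 : 1 + V = v * Nn/(κ*lam) := by rw [hV]; ring
  have hNN : N = m + B - b := by linear_combination hNb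
  subst hNN hS
  rw [hV1]
  subst hV hs1
  clear hκd
  subst hρ
  rw [hz] at hN ⊢
  clear hz hld hV1
  field_simp
  field_simp at hN
  subst hN
  ring

lemma step_alg {K : Type*} [Field K] (z v ρ m B b dv dρ Nn dN: K)
  (hdv : dv = -(1+v)*(2*ρ-z*v)+(B+m)*v+m)
  (hdρ : v*dρ = -ρ*(ρ-m)-z*v^2*(ρ-b))
  (hN : Nn = -(ρ-m)*(ρ-B-1)+z*v*(ρ-b))
  (hdN : dN = -dρ*(2*ρ-m-B-1)+(z*v+z*dv)*(ρ-b)+z*v*dρ) :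
  ρ * Nn + v * dN = ((B+1)*(ρ-m) - Nn)*(ρ-m-z*v) := by
  subst hN hdN hdv
  linear_combination (-(2*ρ-m-B-1)+z*v) * hdρ


lemma step_dv {K : Type*} [Field K] (z v ρ m B b dv dρ κ lam Nn V S: K)
  (hv : v ≠ 0) (hκ : κ ≠ 0) (hl : lam ≠ 0) (hN0 : Nn ≠ 0)
  (hdv : dv = -(1+v)*(2*ρ-z*v)+(B+m)*v+m)
  (hdρ : dρ = -ρ*κ/v-z*v*(ρ-b))
  (hκd : κ = ρ - m) (hld : lam = κ - z*v)
  (hN : Nn = -κ*(ρ-B-1)+z*v*(ρ-b))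
  (hV : V = v * Nn/(κ*lam) - 1)
  (hS : S = (B+1) - Nn/κ - ((B+1)*κ-Nn)*lam/(v*Nn)) :
  (v * Nn/(κ*lam)) * (dv/v + (((B+1)*κ-Nn)*lam/(v*Nn) - ρ/v) - dρ/κ - (dρ - z*v - z*dv)/lam)
   = -(1+V)*(2*S-z*V)+((B+1)+(m-1))*V+(m-1) := by
  have hz : z = (κ - lam)/v := by rw [hld]; field_simp; ring
  have hρ : ρ = κ + m := by rw [hκd]; ring
  have hb : b = ρ - (Nn + κ*(ρ-B-1))/(z*v) ∨ z = 0 := by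
    by_cases h : z = 0
    · right; exact h
    · left; rw [hN]; field_simp; ring
  subst hV hS hdv hdρ
  clear hκd
  subst hρ
  rw [hz] at hN ⊢
  clear hz hld hb
  field_simp
  field_simp at hN
  subst hN
  ring

/-- Level-`n` state of the Toda chain in the differential field. -/
structure PVSt {K : Type*} [Field K] (θ : Derivation ℤ K K) (z N b m B P Q bf bg v ρ : K) : Prop where
  hP : P ≠ 0
  hQ : Q ≠ 0
  hv : v ≠ 0
  hv1 : 1 + v ≠ 0
  hm : θ m = 0
  hB : θ B = 0
  hNb : N + b = m + B
  hw : P * v = Q * (1 + v)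
  hx : θ P = P * (ρ / v - B + m)
  hdv : θ v = -(1+v)*(2*ρ-z*v)+(B+m)*v+m
  hdρ : θ ρ = -ρ*(ρ-m)/v-z*v*(ρ-b)
  hbf : bf = -((1+v)*(ρ/v)-(m+1))*((1+v)*(ρ/v)-B)+ (1+v)*z*((1+v)*(ρ/v)-b)
  hbg : bg = -(ρ-(m+B*v/(1+v))+B-1)*(ρ-(m+B*v/(1+v))+m)+v*z*(ρ-(m+B*v/(1+v))+N)

lemma PVSt.step {K : Type*} [Field K] {θ : Derivation ℤ K K} {z N b m B P Q bf bg v ρ : K}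
    (h : PVSt θ z N b m B P Q bf bg v ρ) (hz : θ z = z) (hz0 : z ≠ 0) (hb : θ b = 0)
    (bf1 bg1 P1 Q1 : K)
    (hbf1 : bf1 = θ (θ P / P) - θ P / P + bf)
    (hbg1 : bg1 = θ (θ Q / Q) - θ Q / Q + bg)
    (hP1 : P1 = P * bf1 / z ^ 2) (hQ1 : Q1 = Q * bg1 / z ^ 2)
    (hP10 : P1 ≠ 0) (hQ10 : Q1 ≠ 0) (hPQ : P1 ≠ Q1) :
    ∃ V S, PVSt θ z N b (m-1) (B+1) P1 Q1 bf1 bg1 V S := by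
  obtain ⟨hP, hQ, hv, hv1, hm, hB, hNb, hw, hx, hdv, hdρ, hbf, hbg⟩ := h
  have hbf0 : bf1 ≠ 0 := by rintro rfl; simp at hP1; exact hP10 hP1
  have hbg0 : bg1 ≠ 0 := by rintro rfl; simp at hQ1; exact hQ10 hQ1
  have h1 : θ (1:K) = 0 := θ.map_one_eq_zero
  set κ := ρ - m with hκd
  set lam := κ - z*v with hld
  -- x
  have hxx : θ P / P = ρ / v - B + m := by rw [hx]; field_simp
  have hQv : Q = P * v / (1+v) := by field_simp; linear_combination -hw
  have hyy : θ Q / Q = -ρ/v - B + m + z + m/v + B/(1+v) := by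
    rw [hQv, Derivation.leibniz_div, Derivation.leibniz, map_add, h1]
    simp only [smul_eq_mul]
    rw [hx, hdv]
    field_simp
    ring
  have hNn : bf1 = -κ*(ρ-B-1)+z*v*(ρ-b) := by
    rw [hbf1, hxx, map_add, map_sub, hm, hB, Derivation.leibniz_div]
    simp only [smul_eq_mul]
    rw [hdρ, hdv, hbf, hκd]
    field_simp
    ring
  have hGn : bg1 = (1+v)/v^2 * (v*bf1 - κ * lam) := by
    rw [hNn, hbg1, hyy]
    simp only [map_add, map_sub, hm, hB, hz, h1, Derivation.leibniz_div, smul_eq_mul, map_neg]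
    have hNN : N = m + B - b := by linear_combination hNb
    rw [hdρ, hdv, hbg, hld, hκd, hNN]
    field_simp
    ring
  have hκl : κ * lam ≠ 0 := by
    intro h0
    apply hPQ
    rw [hP1, hQ1, hGn, h0, hQv]
    field_simp
    ring
  have hκ : κ ≠ 0 := left_ne_zero_of_mul hκl
  have hl : lam ≠ 0 := right_ne_zero_of_mul hκl
  have hG0 : v*bf1 - κ * lam ≠ 0 := by
    intro h0; rw [h0] at hGn; simp at hGn; exact hbg0 hGn
  have hdκ : θ κ = θ ρ := by rw [hκd, map_sub, hm, sub_zero]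
  have hdl : θ lam = θ ρ - z*v - z*θ v := by
    rw [hld, map_sub, hdκ, Derivation.leibniz, hz]; simp only [smul_eq_mul]; ring
  obtain ⟨V, hV⟩ : ∃ V, V = v * bf1/(κ*lam) - 1 := ⟨_, rfl⟩
  obtain ⟨s1, hs1⟩ : ∃ s1, s1 = ((B+1)*κ-bf1)*lam/(v*bf1) := ⟨_, rfl⟩
  obtain ⟨S, hS⟩ : ∃ S, S = (B+1) - bf1/κ - s1 := ⟨_, rfl⟩
  have hdN : θ bf1 = bf1 * (s1 - ρ/v) := by
    have hd : θ bf1 = -θ ρ*(2*ρ-m-B-1)+(z*v+z*θ v)*(ρ-b)+z*v*θ ρ := by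
      rw [hNn]
      simp only [map_add, map_sub, hm, hB, hb, hz, h1, Derivation.leibniz, smul_eq_mul, map_neg, hdκ]
      rw [hκd]
      ring
    have hh := step_alg z v ρ m B b (θ v) (θ ρ) bf1 (θ bf1) hdv
      (by rw [hdρ, hκd]; field_simp) (by rw [hNn]) hd
    rw [hs1]
    field_simp
    linear_combination hh
  have hV0 : V ≠ 0 := by
    rw [hV]; intro h0; apply hG0; field_simp at h0; linear_combination h0
  have hV1 : 1 + V = v * bf1/(κ*lam) := by rw [hV]; ring
  have hV10 : 1 + V ≠ 0 := by
    rw [hV1]; exact div_ne_zero (mul_ne_zero hv hbf0) hκl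
  obtain ⟨hSV, hbf'⟩ := step_bf z v ρ m B b κ lam bf1 V S s1 hv hκ hl hbf0 hκd hld hNn hV hs1 hS
  have hbg' := step_bg z v ρ m B b N κ lam bf1 V S s1 hv hκ hl hbf0 hκd hld hNb hNn hV hs1 hS
  have hSV' : S / V = s1 := by rw [hSV]; field_simp
  have hdV : θ V = -(1+V)*(2*S-z*V)+((B+1)+(m-1))*V+(m-1) := by
    rw [← step_dv z v ρ m B b (θ v) (θ ρ) κ lam bf1 V S hv hκ hl hbf0 hdv hdρ hκd hld hNn hV
      (by rw [hS, hs1]), ← hs1, hV]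
    simp only [map_sub, h1, Derivation.leibniz_div, Derivation.leibniz, smul_eq_mul, hdN, hdκ, hdl]
    field_simp
    ring
  have hs1' : s1 = ((B+1) - bf1/κ)/(1+V) := by
    rw [hV1, hs1]; field_simp
  have hS2 : S = (B+1) - bf1/κ - ((B+1) - bf1/κ)/(1+V) := by rw [← hs1', hS]
  have hdσ : θ ((B+1) - bf1/κ) = -(bf1/κ)*(s1 - ρ/v - θ ρ/κ) := by
    simp only [map_sub, map_add, hB, h1, Derivation.leibniz_div, smul_eq_mul, hdN, hdκ]
    field_simp
    ring
  have hdS : θ S = -S*(S-(m-1))/V-z*V*(S-b) := by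
    have hh := step_dS z v ρ m B b (θ ρ) κ lam bf1 V S s1 hv hκ hl hbf0 hdρ hκd hld hNn hV hs1 hS
    rw [← hdσ, ← hdV] at hh
    have h2 : V * θ S = -S*(S-(m-1))-z*V^2*(S-b) := by
      rw [← hh, hS2, map_sub, Derivation.leibniz_div, map_add θ 1 V, h1]
      simp only [smul_eq_mul]
      field_simp
      ring
    field_simp
    linear_combination h2
  refine ⟨V, S, hP10, hQ10, hV0, hV10, ?_, ?_, ?_, ?_, ?_, hdV, hdS, ?_, ?_⟩
  · rw [map_sub, hm, h1, sub_zero]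
  · rw [map_add, hB, h1, add_zero]
  · rw [hNb]; ring
  · rw [hP1, hQ1, hV1, hV, hGn, hQv]
    field_simp
  · rw [hSV', hP1, pow_two]
    simp only [Derivation.leibniz_div, Derivation.leibniz, smul_eq_mul, hdN, hz, hx]
    field_simp
    ring
  · rw [hSV']; exact hbf'
  · rw [← hbg', hGn]

lemma PVSt.pv {K : Type*} [Field K] {θ : Derivation ℤ K K} {z N b m B P Q bf bg v ρ w : K}
    (h : PVSt θ z N b m B P Q bf bg v ρ) (hz : θ z = z) (hwd : w = P / Q) :
    2 * w * (w-1) * θ (θ w) = (3*w-1) * (θ w)^2 + (w-1)^3*(m^2*w^2 - B^2)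
      + 2*(b - N - 1)*z*w^2*(w-1) - z^2*w^2*(w+1) := by
  obtain ⟨hP, hQ, hv, hv1, hm, hB, hNb, hw, hx, hdv, hdρ, hbf, hbg⟩ := h
  have h1 : θ (1:K) = 0 := θ.map_one_eq_zero
  have h2 : θ (2:K) = 0 := by simpa using θ.map_natCast 2
  have hw' : w = (1+v)/v := by rw [hwd]; field_simp; linear_combination hw
  have hNN : N = m + B - b := by linear_combination hNb
  have hd1 : θ w = - ( -(1+v)*(2*ρ-z*v)+(B+m)*v+m)/v^2 := by
    rw [hw']
    simp only [map_add, h1, Derivation.leibniz_div, smul_eq_mul, hdv]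
    field_simp
    ring
  have hd2 : θ (θ w) = - ( -(θ v)*(2*ρ-z*v) -(1+v)*(2*θ ρ-z*v-z*θ v)+(B+m)*θ v)/v^2
      + 2 * ( -(1+v)*(2*ρ-z*v)+(B+m)*v+m)*θ v/v^3 := by
    rw [hd1]
    simp only [map_add, map_sub, map_neg, h1, h2, hz, hm, hB, pow_two, Derivation.leibniz_div,
      Derivation.leibniz, smul_eq_mul]
    field_simp
    ring
  rw [hd2, hd1, hw', hdρ, hdv, hNN]
  field_simp
  ring

lemma PVSt.base {K : Type*} [Field K] {θ : Derivation ℤ K K} {z N b P Q : K} (hP : P ≠ 0)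
    (hQ : Q ≠ 0) (hPQ : P ≠ Q) (hN : θ N = 0) (hb : θ b = 0)
    (h1 : θ P = N * P - b * Q) (h2 : θ Q = z * Q + N * P - b * Q) :
    ∃ v ρ, PVSt θ z N b N b P Q 0 0 v ρ := by
  have hd : P - Q ≠ 0 := sub_ne_zero.mpr hPQ
  have h11 : 1 + Q/(P-Q) = P / (P - Q) := by field_simp; ring
  refine ⟨Q / (P - Q), b * Q / P, hP, hQ, div_ne_zero hQ hd, ?_, hN, hb, rfl, ?_, ?_, ?_, ?_, ?_, ?_⟩
  · rw [h11]; exact div_ne_zero hP hd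
  · rw [h11]; field_simp
  · rw [h1]; field_simp; ring
  · rw [Derivation.leibniz_div, map_sub, h11, h1, h2]
    simp only [smul_eq_mul]
    field_simp
    ring
  · rw [Derivation.leibniz_div, Derivation.leibniz, hb, h1, h2]
    simp only [smul_eq_mul]
    field_simp
    ring
  · rw [h11]; field_simp; ring
  · rw [h11]; field_simp; ring

lemma toda_bf {K : Type*} [Field K] {θ : Derivation ℤ K K} {z F0 F1 F2 : K} (h0 : F0 ≠ 0)
    (h1 : F1 ≠ 0) (hz0 : z ≠ 0)
    (hT : z ^ 2 * (F2 * F0) = F1 * (θ (θ F1) - θ F1) - (θ F1)^2) :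
    F2 / F1 = (F1 / F0) * (θ (θ F1 / F1) - θ F1 / F1) / z ^ 2 ∧
    (θ (θ F1 / F1) - θ F1 / F1) = θ (θ (F1/F0) / (F1/F0)) - θ (F1/F0)/(F1/F0)
      + (θ (θ F0 / F0) - θ F0 / F0) := by
  constructor
  · rw [Derivation.leibniz_div]
    simp only [smul_eq_mul]
    field_simp
    linear_combination hT
  · have : θ (F1/F0) / (F1/F0) = θ F1 / F1 - θ F0 / F0 := by
      rw [Derivation.leibniz_div]
      simp only [smul_eq_mul]
      field_simp
    rw [this, map_sub]
    ring

lemma PVSt.chain {K : Type*} [Field K] {θ : Derivation ℤ K K} {z N b : K} (F G : ℕ → K)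
    (hz : θ z = z) (hz0 : z ≠ 0) (hN : θ N = 0) (hb : θ b = 0) (M : ℕ)
    (hF : ∀ j ≤ M + 1, F j ≠ 0) (hG : ∀ j ≤ M + 1, G j ≠ 0)
    (hFG : ∀ j ≤ M, F (j+1) * G j ≠ F j * G (j+1))
    (hF0 : F 0 = 1) (hG0 : G 0 = 1)
    (h1 : θ (F 1) = N * F 1 - b * G 1) (h2 : θ (G 1) = z * G 1 + N * F 1 - b * G 1)
    (hTF : ∀ j < M, z ^ 2 * (F (j+2) * F j) = F (j+1) * (θ (θ (F (j+1))) - θ (F (j+1))) - (θ (F (j+1)))^2)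
    (hTG : ∀ j < M, z ^ 2 * (G (j+2) * G j) = G (j+1) * (θ (θ (G (j+1))) - θ (G (j+1))) - (θ (G (j+1)))^2)
    (n : ℕ) (hn : n ≤ M) :
    ∃ v ρ, PVSt θ z N b (N - n) (b + n) (F (n+1) / F n) (G (n+1) / G n)
      (θ (θ (F n) / F n) - θ (F n) / F n) (θ (θ (G n) / G n) - θ (G n) / G n) v ρ := by
  have hne : ∀ j ≤ M, F (j+1) / F j ≠ G (j+1) / G j := by
    intro j hj h
    apply hFG j hj
    have a1 := hF j (by omega)
    have a2 := hG j (by omega)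
    field_simp at h
    linear_combination h
  induction n with
  | zero =>
    have e1 : θ (1:K) = 0 := θ.map_one_eq_zero
    have := PVSt.base (θ := θ) (z := z) (N := N) (b := b) (hF 1 (by omega)) (hG 1 (by omega))
      (by simpa [hF0, hG0] using hne 0 (by omega)) hN hb h1 h2
    simpa [hF0, hG0, e1] using this
  | succ n ih =>
    obtain ⟨v, ρ, h⟩ := ih (by omega)
    obtain ⟨f1, f2⟩ := toda_bf (hF n (by omega)) (hF (n+1) (by omega)) hz0 (hTF n (by omega))
    obtain ⟨g1, g2⟩ := toda_bf (hG n (by omega)) (hG (n+1) (by omega)) hz0 (hTG n (by omega))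
    have := h.step hz hz0 hb _ _ _ _ f2 g2 f1 g1
      (div_ne_zero (hF _ (by omega)) (hF _ (by omega)))
      (div_ne_zero (hG _ (by omega)) (hG _ (by omega))) (hne (n+1) hn)
    have e1 : N - ((n+1 : ℕ) : K) = N - n - 1 := by push_cast; ring
    have e2 : b + ((n+1 : ℕ) : K) = b + n + 1 := by push_cast; ring
    rw [e1, e2]
    exact this


open Polynomial in
/-- Extension of the derivative of polynomials to the fraction field, via dual numbers. -/
lemma exists_frac_deriv (K : Type*) [Field K] [Algebra ℝ[X] K] [IsFractionRing ℝ[X] K] :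
    ∃ D : Derivation ℤ K K,
    ∀ p : ℝ[X], D (algebraMap _ _ p) = algebraMap _ _ (derivative p) := by
  let g : ℝ[X] →+* TrivSqZeroExt K K :=
    { toFun := fun p => TrivSqZeroExt.inl (algebraMap ℝ[X] K p)
          + TrivSqZeroExt.inr (algebraMap ℝ[X] K (derivative p))
      map_one' := by
        ext <;> simp
      map_zero' := by
        ext <;> simp
      map_add' := by
        intro p q
        ext <;> simp [Algebra.smul_def]
      map_mul' := by
        intro p q
        ext
        · simp
        · simp only [map_mul, derivative_mul, map_add, TrivSqZeroExt.snd_add, TrivSqZeroExt.snd_mul,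
            TrivSqZeroExt.snd_inl, TrivSqZeroExt.snd_inr, TrivSqZeroExt.fst_add,
            TrivSqZeroExt.fst_inl, TrivSqZeroExt.fst_inr, smul_eq_mul, op_smul_eq_mul]
          ring }
  have hg : ∀ y : nonZeroDivisors ℝ[X], IsUnit (g y) := by
    intro y
    rw [TrivSqZeroExt.isUnit_iff_isUnit_fst]
    simpa [g] using IsLocalization.map_units K y
  let φ : K →+* TrivSqZeroExt K K := IsLocalization.lift hg
  have hφ : ∀ p, φ (algebraMap _ _ p) = g p := fun p => IsLocalization.lift_eq hg p
  have hfst : ∀ x, (φ x).fst = x := by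
    have : (TrivSqZeroExt.fstHom K K K).toRingHom.comp φ = RingHom.id K := by
      apply IsLocalization.ringHom_ext (nonZeroDivisors ℝ[X])
      refine RingHom.ext fun p => ?_
      simp [hφ, g]
    intro x
    exact congrArg (fun f => f x) this
  refine ⟨Derivation.mk' { toFun := fun x => (φ x).snd, map_add' := ?_, map_smul' := ?_ } ?_, ?_⟩
  · intro x y; simp
  · intro n x; simp
  · intro x y
    simp only [LinearMap.coe_mk, AddHom.coe_mk, map_mul, TrivSqZeroExt.snd_mul, hfst, smul_eq_mul,
      op_smul_eq_mul]
    ring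
  · intro p
    change (φ _).snd = _
    rw [hφ]
    change (TrivSqZeroExt.inl _ + TrivSqZeroExt.inr _ : TrivSqZeroExt K K).snd = _
    rw [TrivSqZeroExt.snd_add, TrivSqZeroExt.snd_inl, TrivSqZeroExt.snd_inr, zero_add]

/-- The bordered-determinant (Schur complement) form of the Jacobi identity. -/
lemma det_bordered {K : Type*} [Field K] {n l : ℕ} (A : Matrix (Fin n) (Fin n) K) (hA : A.det ≠ 0)
    (M : Matrix (Fin (n + l)) (Fin (n + l)) K)
    (hM : ∀ i j, M (Fin.castAdd l i) (Fin.castAdd l j) = A i j) :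
    M.det = A.det * (Matrix.of fun i j : Fin l => M (Fin.natAdd n i) (Fin.natAdd n j)
      - ∑ a, (∑ c, M (Fin.natAdd n i) (Fin.castAdd l c) * A⁻¹ c a)
        * M (Fin.castAdd l a) (Fin.natAdd n j)).det := by
  have hu : IsUnit A.det := isUnit_iff_ne_zero.mpr hA
  haveI : Invertible A := A.invertibleOfIsUnitDet hu
  rw [← Matrix.det_submatrix_equiv_self finSumFinEquiv M,
    ← Matrix.fromBlocks_toBlocks (M.submatrix _ _)]
  have : (M.submatrix finSumFinEquiv finSumFinEquiv).toBlocks₁₁ = A := by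
    ext i j; simp [Matrix.toBlocks₁₁, hM]
  rw [this, Matrix.det_fromBlocks₁₁, Matrix.invOf_eq_nonsing_inv]
  congr 2

/-- Jacobi identity for (infinite) array `h`. -/
lemma jacobi_array {K : Type*} [Field K] (h : ℕ → ℕ → K) (n : ℕ)
    (hA : (Matrix.of fun i j : Fin n => h i j).det ≠ 0) :
    (Matrix.of fun i j : Fin (n+2) => h i j).det * (Matrix.of fun i j : Fin n => h i j).det
     = (Matrix.of fun i j : Fin (n+1) => h i j).det
       * (Matrix.of fun i j : Fin (n+1) => h (if (i:ℕ) = n then n+1 else i) (if (j:ℕ) = n then n+1 else j)).det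
       - (Matrix.of fun i j : Fin (n+1) => h (if (i:ℕ) = n then n+1 else i) j).det
       * (Matrix.of fun i j : Fin (n+1) => h i (if (j:ℕ) = n then n+1 else j)).det := by
  have hne : ∀ i : Fin n, (i : ℕ) ≠ n := fun i => i.2.ne
  rw [det_bordered (l := 2) _ hA _ (by intro i j; simp),
    det_bordered (l := 1) _ hA (Matrix.of fun i j : Fin (n+1) => h i j) (by intro i j; simp),
    det_bordered (l := 1) _ hA (Matrix.of fun i j : Fin (n+1) => h (if (i:ℕ) = n then n+1 else i) (if (j:ℕ) = n then n+1 else j)) (by intro i j; simp [hne]),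
    det_bordered (l := 1) _ hA (Matrix.of fun i j : Fin (n+1) => h (if (i:ℕ) = n then n+1 else i) j) (by intro i j; simp [hne]),
    det_bordered (l := 1) _ hA (Matrix.of fun i j : Fin (n+1) => h i (if (j:ℕ) = n then n+1 else j)) (by intro i j; simp [hne])]
  simp [Matrix.det_fin_two, Matrix.det_fin_one, hne]
  ring


section hankel
open Polynomial

/-- Determinant of derivatives of `p` with row and column order functions. -/
def dmat (p : ℝ[X]) {n : ℕ} (r c : Fin n → ℕ) : ℝ[X] :=
  (Matrix.of fun i j : Fin n => derivative^[r i + c j] p).det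

/-- Hankel determinant of derivatives. -/
def htau (p : ℝ[X]) (n : ℕ) : ℝ[X] :=
  (Matrix.of fun i j : Fin n => derivative^[(i : ℕ) + (j : ℕ)] p).det

lemma dmat_symm (p : ℝ[X]) {n : ℕ} (r c : Fin n → ℕ) : dmat p r c = dmat p c r := by
  unfold dmat
  rw [← Matrix.det_transpose]
  congr 1
  ext i j : 2
  simp [add_comm]

lemma dmat_deriv (p : ℝ[X]) {n : ℕ} (r c : Fin n → ℕ) :
    derivative (dmat p r c) = ∑ k, dmat p (Function.update r k (r k + 1)) c := by
  unfold dmat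
  simp only [Matrix.det_apply', map_sum]
  rw [Finset.sum_comm]
  refine Finset.sum_congr rfl fun σ _ => ?_
  rw [← Finset.mul_sum]
  have h0 : derivative ((((Equiv.Perm.sign σ : ℤˣ) : ℤ) : ℝ[X])) = 0 := derivative_intCast
  rw [derivative_mul, h0, zero_mul, zero_add]
  congr 1
  -- reindex product by rows
  have e1 : ∀ r : Fin n → ℕ, ∏ i, (Matrix.of fun i j : Fin n => derivative^[r i + c j] p) (σ i) i
      = ∏ i, derivative^[r i + c (σ.symm i)] p := by
    intro r
    rw [← Equiv.prod_comp σ (fun i => derivative^[r i + c (σ.symm i)] p)]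
    simp
  rw [e1]
  simp only [e1]
  rw [derivative_prod_finset]
  refine Finset.sum_congr rfl fun k _ => ?_
  rw [← Finset.prod_erase_mul _ _ (Finset.mem_univ k)]
  congr 1
  · refine Finset.prod_congr rfl fun i hi => ?_
    rw [Function.update_of_ne (Finset.ne_of_mem_erase hi)]
  · rw [Function.update_self, add_right_comm, Function.iterate_succ_apply']

/-- Last-index shifted order function. -/
def shl (n : ℕ) (i : Fin (n + 1)) : ℕ := if (i : ℕ) = n then n + 1 else i

lemma dmat_deriv_val (p : ℝ[X]) (n : ℕ) (c : Fin (n + 1) → ℕ) :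
    derivative (dmat p (fun i : Fin (n+1) => (i : ℕ)) c) = dmat p (shl n) c := by
  rw [dmat_deriv, Finset.sum_eq_single (Fin.last n)]
  · congr 1
    ext i
    by_cases h : i = Fin.last n
    · subst h; simp [shl]
    · rw [Function.update_of_ne h]
      have : (i : ℕ) ≠ n := fun h' => h (Fin.ext (by simpa using h'))
      simp [shl, this]
  · intro k _ hk
    have hkn : (k : ℕ) < n := by
      rcases lt_or_eq_of_le (Nat.lt_succ_iff.mp k.2) with h | h
      · exact h
      · exact absurd (Fin.ext (by simpa using h)) hk
    unfold dmat
    apply Matrix.det_zero_of_row_eq (i := k) (j := ⟨k + 1, by omega⟩)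
    · intro h
      have := congrArg Fin.val h
      simp at this
    · ext j : 1
      simp only [Matrix.of_apply]
      rw [Function.update_self, Function.update_of_ne]
      intro h
      have := congrArg Fin.val h
      simp at this
  · simp

lemma htau_eq (p : ℝ[X]) (n : ℕ) : htau p n = dmat p (fun i : Fin n => (i : ℕ)) (fun i => (i : ℕ)) := rfl

lemma htau_zero (p : ℝ[X]) : htau p 0 = 1 := by simp [htau]

lemma htau_one (p : ℝ[X]) : htau p 1 = p := by simp [htau]

lemma htau_deriv (p : ℝ[X]) (n : ℕ) : derivative (htau p (n+1)) = dmat p (shl n) (fun i => (i : ℕ)) := by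
  rw [htau_eq, dmat_deriv_val]

lemma htau_deriv2 (p : ℝ[X]) (n : ℕ) :
    derivative (derivative (htau p (n+1))) = dmat p (shl n) (shl n) := by
  rw [htau_deriv, dmat_symm, dmat_deriv_val]

/-- The Toda equation. -/
lemma htau_toda (p : ℝ[X]) (n : ℕ) (h : htau p n ≠ 0) :
    htau p (n+2) * htau p n = htau p (n+1) * derivative (derivative (htau p (n+1)))
      - (derivative (htau p (n+1)))^2 := by
  have inj := IsFractionRing.injective ℝ[X] (FractionRing ℝ[X])
  have key : ∀ (l : ℕ) (r c : Fin l → ℕ), algebraMap ℝ[X] (FractionRing ℝ[X]) (dmat p r c) =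
    (Matrix.of fun i j : Fin l => algebraMap ℝ[X] (FractionRing ℝ[X]) (derivative^[r i + c j] p)).det := by
    intro l r c
    rw [dmat, RingHom.map_det]
    rfl
  have J := jacobi_array (fun i j => algebraMap ℝ[X] (FractionRing ℝ[X]) (derivative^[i + j] p)) n
    (by rw [← key, ← htau_eq]; exact (map_ne_zero_iff _ inj).mpr h)
  simp only [← key] at J
  rw [htau_deriv2, htau_deriv, sq]
  nth_rewrite 3 [dmat_symm]
  apply inj
  simp only [map_sub, map_mul]
  exact J
end hankel


section degrees
open Polynomial

lemma coeff_X_mul_deriv (q : ℝ[X]) (k : ℕ) : (X * derivative q).coeff k = k * q.coeff k := by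
  cases k with
  | zero => simp
  | succ k => rw [coeff_X_mul, coeff_derivative]; push_cast; ring

lemma natDegree_X_mul_deriv (q : ℝ[X]) : (X * derivative q).natDegree ≤ q.natDegree := by
  rw [natDegree_le_iff_coeff_eq_zero]
  intro k hk
  rw [coeff_X_mul_deriv, coeff_eq_zero_of_natDegree_lt hk, mul_zero]

lemma toda_degree (q : ℝ[X]) (hd : 1 ≤ q.natDegree) :
    q * derivative (derivative q) - (derivative q)^2 ≠ 0 ∧
    (q * derivative (derivative q) - (derivative q)^2).natDegree + 2 = 2 * q.natDegree := by
  set d := q.natDegree with hdd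
  set R := q * derivative (derivative q) - (derivative q)^2 with hR
  have hq : q ≠ 0 := by rintro rfl; simp at hdd; omega
  have e1 : X^2 * R = q * (X * derivative (X * derivative q) - X * derivative q)
      - (X * derivative q) * (X * derivative q) := by
    rw [hR, derivative_mul, derivative_X]; ring
  have n1 := natDegree_X_mul_deriv q
  have n2 : (X * derivative (X * derivative q) - X * derivative q).natDegree ≤ d := by
    refine (natDegree_sub_le _ _).trans (max_le ((natDegree_X_mul_deriv _).trans n1) n1)
  have hc : (X^2 * R).coeff (d + d) = - (q.coeff d)^2 * d := by
    rw [e1, coeff_sub, coeff_mul_add_eq_of_natDegree_le le_rfl n2,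
      coeff_mul_add_eq_of_natDegree_le n1 n1, coeff_sub, coeff_X_mul_deriv, coeff_X_mul_deriv]
    ring
  have hc0 : (X^2 * R).coeff (d + d) ≠ 0 := by
    rw [hc]
    have h1 : q.coeff d ≠ 0 := by rw [hdd]; simpa using hq
    have h2 : (d : ℝ) ≠ 0 := by exact_mod_cast (by omega : d ≠ 0)
    exact mul_ne_zero (neg_ne_zero.mpr (pow_ne_zero _ h1)) h2
  have hn : (X^2 * R).natDegree ≤ d + d := by
    rw [e1]
    refine (natDegree_sub_le _ _).trans (max_le ?_ ?_)
    · exact natDegree_mul_le.trans (add_le_add le_rfl n2)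
    · exact natDegree_mul_le.trans (add_le_add n1 n1)
  have hn' : (X^2 * R).natDegree = d + d := le_antisymm hn (le_natDegree_of_ne_zero hc0)
  have hR0 : R ≠ 0 := by
    intro h; rw [h] at hc0; simp at hc0
  refine ⟨hR0, ?_⟩
  rw [natDegree_mul (pow_ne_zero _ X_ne_zero) hR0, natDegree_X_pow] at hn'
  omega

lemma htau_degree (p : ℝ[X]) (hp : p ≠ 0) (M : ℕ) (hM : p.natDegree = M) (j : ℕ) (hj : j ≤ M) :
    (htau p j ≠ 0 ∧ (htau p j).natDegree = j * (M + 1 - j)) ∧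
    (htau p (j+1) ≠ 0 ∧ (htau p (j+1)).natDegree = (j + 1) * (M - j)) := by
  induction j with
  | zero => simp [htau_zero, htau_one, hp, hM]
  | succ j ih =>
    obtain ⟨⟨a1, a2⟩, b1, b2⟩ := ih (by omega)
    obtain ⟨k, rfl⟩ : ∃ k, M = j + 1 + k := ⟨M - (j+1), by omega⟩
    have e1 : j + 1 + k + 1 - j = k + 2 := by omega
    have e2 : j + 1 + k - j = k + 1 := by omega
    have e3 : j + 1 + k + 1 - (j+1) = k + 1 := by omega
    have e4 : j + 1 + k - (j+1) = k := by omega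
    rw [e1] at a2
    rw [e2] at b2
    rw [e3, e4]
    refine ⟨⟨b1, b2⟩, ?_⟩
    obtain ⟨r1, r2⟩ := toda_degree (htau p (j+1)) (by rw [b2]; nlinarith)
    rw [← htau_toda p j a1] at r1 r2
    have h2 : htau p (j+1+1) ≠ 0 := left_ne_zero_of_mul r1
    refine ⟨h2, ?_⟩
    rw [natDegree_mul h2 a1, a2, b2] at r2
    change (htau p (j+1+1)).natDegree + _ + _ = _ at r2
    nlinarith
end degrees


section laguerre
open Polynomial

lemma genBinom_zero (x : ℝ) : genBinom x 0 = 1 := by simp [genBinom]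

lemma genBinom_succ_mul (x : ℝ) (r : ℕ) :
    ((r : ℝ) + 1) * genBinom x (r+1) = x * genBinom (x - 1) r := by
  unfold genBinom
  rw [Finset.prod_range_succ', Nat.factorial_succ]
  have : ∀ i ∈ Finset.range r, x - ((i + 1 : ℕ) : ℝ) = x - 1 - (i : ℝ) := by
    intro i _; push_cast; ring
  rw [Finset.prod_congr rfl this]
  have h : (r.factorial : ℝ) ≠ 0 := by exact_mod_cast r.factorial_ne_zero
  have h2 : (r : ℝ) + 1 ≠ 0 := by positivity
  push_cast
  field_simp
  ring

lemma genBinom_succ_mul' (x : ℝ) (r : ℕ) :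
    ((r : ℝ) + 1) * genBinom x (r+1) = (x - r) * genBinom x r := by
  unfold genBinom
  rw [Finset.prod_range_succ, Nat.factorial_succ]
  have h : (r.factorial : ℝ) ≠ 0 := by exact_mod_cast r.factorial_ne_zero
  have h2 : (r : ℝ) + 1 ≠ 0 := by positivity
  push_cast
  field_simp

lemma genBinom_pascal (x : ℝ) (r : ℕ) :
    genBinom x (r+1) = genBinom (x-1) r + genBinom (x - 1) (r + 1) := by
  have h2 : (r : ℝ) + 1 ≠ 0 := by positivity
  apply mul_left_cancel₀ h2
  linear_combination genBinom_succ_mul x r - genBinom_succ_mul' (x - 1) r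

/-- Laguerre polynomial as an element of `ℝ[X]`. -/
def pLag (N : ℕ) (a : ℝ) : ℝ[X] :=
  ∑ k ∈ Finset.range (N + 1), C ((-1 : ℝ) ^ k * genBinom ((N : ℝ) + a) (N - k) / (Nat.factorial k)) * X ^ k

lemma pLag_coeff (N : ℕ) (a : ℝ) (k : ℕ) : (pLag N a).coeff k =
    if k ≤ N then (-1 : ℝ) ^ k * genBinom ((N : ℝ) + a) (N - k) / (Nat.factorial k) else 0 := by
  unfold pLag
  rw [finset_sum_coeff]
  simp only [coeff_C_mul_X_pow]
  rw [Finset.sum_ite_eq]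
  simp [Nat.lt_succ_iff]

lemma pLag_natDegree (N : ℕ) (a : ℝ) : pLag N a ≠ 0 ∧ (pLag N a).natDegree = N := by
  have h : (pLag N a).coeff N ≠ 0 := by
    rw [pLag_coeff]
    simp [genBinom_zero, Nat.factorial_ne_zero]
  constructor
  · intro h0; simp [h0] at h
  · apply le_antisymm
    · rw [natDegree_le_iff_coeff_eq_zero]
      intro k hk
      rw [pLag_coeff, if_neg (by omega)]
    · exact le_natDegree_of_ne_zero h

lemma pLag_eval (N : ℕ) (a : ℝ) (z : ℝ) : (pLag N a).eval z = lagL (N : ℤ) a z := by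
  unfold pLag lagL
  rw [if_neg (by omega), eval_finset_sum]
  simp only [Int.toNat_natCast, Int.cast_natCast]
  refine Finset.sum_congr rfl fun k _ => ?_
  simp
  ring

lemma pLag_rel1 (M : ℕ) (a : ℝ) : X * derivative (pLag (M+1) a) =
    C ((M : ℝ) + 1) * pLag (M+1) a - C ((M : ℝ) + 1 + a) * pLag M a := by
  ext k
  rw [coeff_X_mul_deriv, coeff_sub, coeff_C_mul, coeff_C_mul, pLag_coeff, pLag_coeff]
  rcases lt_trichotomy k (M+1) with h | h | h
  · obtain ⟨r, rfl⟩ : ∃ r, M = k + r := ⟨M - k, by omega⟩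
    rw [if_pos (by omega), if_pos (by omega)]
    have e1 : k + r + 1 - k = r + 1 := by omega
    have e2 : k + r - k = r := by omega
    rw [e1, e2]
    have := genBinom_succ_mul (((k + r + 1 : ℕ) : ℝ) + a) r
    have e3 : (((k + r + 1 : ℕ) : ℝ) + a) - 1 = ((k + r : ℕ) : ℝ) + a := by push_cast; ring
    rw [e3] at this
    push_cast at this ⊢
    linear_combination (-(-1)^k / (k.factorial : ℝ)) * this
  · subst h
    simp
  · rw [if_neg (by omega), if_neg (by omega)]; simp

lemma pLag_rel2 (M : ℕ) (a : ℝ) : derivative (pLag (M+1) a) =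
    derivative (pLag M a) - pLag M a := by
  ext k
  rw [coeff_sub, coeff_derivative, coeff_derivative, pLag_coeff, pLag_coeff, pLag_coeff]
  have hk : (k.factorial : ℝ) ≠ 0 := by exact_mod_cast k.factorial_ne_zero
  have h2 : (k : ℝ) + 1 ≠ 0 := by positivity
  rcases lt_trichotomy k M with h | h | h
  · obtain ⟨r, rfl⟩ : ∃ r, M = k + 1 + r := ⟨M - (k + 1), by omega⟩
    rw [if_pos (by omega), if_pos (by omega), if_pos (by omega)]
    have e1 : k + 1 + r + 1 - (k + 1) = r + 1 := by omega
    have e2 : k + 1 + r - (k + 1) = r := by omega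
    have e4 : k + 1 + r - k = r + 1 := by omega
    rw [e1, e2, e4]
    have := genBinom_pascal (((k + 1 + r + 1 : ℕ) : ℝ) + a) r
    have e3 : (((k + 1 + r + 1 : ℕ) : ℝ) + a) - 1 = ((k + 1 + r : ℕ) : ℝ) + a := by push_cast; ring
    rw [e3] at this
    rw [this, Nat.factorial_succ]
    push_cast
    field_simp
    ring
  · subst h
    rw [Nat.factorial_succ]
    simp [genBinom_zero]
    field_simp
    ring
  · rw [if_neg (by omega), if_neg (by omega), if_neg (by omega)]; simp

lemma iteratedDeriv_eval (p : ℝ[X]) (k : ℕ) :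
    iteratedDeriv k (fun z => p.eval z) = fun z => (derivative^[k] p).eval z := by
  induction k with
  | zero => simp
  | succ k ih =>
    rw [iteratedDeriv_succ, ih, Function.iterate_succ_apply']
    ext z
    simp

lemma genLag_eval (k : ℤ) (n N : ℕ) (μ : ℝ) (h : k + n = N) (z : ℝ) :
    genLag k n μ z = (htau (pLag N (μ + 1)) n).eval z := by
  unfold genLag htau
  have hL : lagL (k + n) (μ + 1) = fun z => (pLag N (μ + 1)).eval z := by
    ext z; rw [h, pLag_eval]
  rw [hL]
  simp only [iteratedDeriv_eval]
  rw [← coe_evalRingHom, RingHom.map_det]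
  rfl
end laguerre


lemma pv_clear_den {K : Type*} [Field K] {θ : Derivation ℤ K K} {z u v u1 v1 u2 v2 m B c w : K}
    (hz : θ z = z) (hv : v ≠ 0) (hu0 : θ u = z * u1) (hv0 : θ v = z * v1)
    (hu1 : θ u1 = z * u2) (hv1 : θ v1 = z * v2) (hw : w = u / v)
    (hpv : 2 * w * (w-1) * θ (θ w) = (3*w-1) * (θ w)^2 + (w-1)^3*(m^2*w^2 - B^2)
      + 2*c*z*w^2*(w-1) - z^2*w^2*(w+1)) :
    2*u*(u-v)*z^2*((u2*v-u*v2)*v-2*(u1*v-u*v1)*v1) = (3*u-v)*z^2*(u1*v-u*v1)^2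
      - 2*u*(u-v)*z*(u1*v-u*v1)*v + (u-v)^3*(m^2*u^2-B^2*v^2) + 2*c*z*u^2*(u-v)*v^2
      - z^2*u^2*(u+v)*v^2 := by
  have h1 : θ w = z * (u1*v-u*v1) / v^2 := by
    rw [hw, Derivation.leibniz_div, hu0, hv0]
    simp only [smul_eq_mul]
    field_simp
  have h2 : θ (θ w) = z * (u1*v-u*v1) / v^2 + z^2*((u2*v-u*v2)*v-2*(u1*v-u*v1)*v1)/v^3 := by
    rw [h1]
    simp only [map_sub, pow_two, Derivation.leibniz_div, Derivation.leibniz, smul_eq_mul, hz, hu0,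
      hv0, hu1, hv1]
    field_simp
    ring
  rw [h2, h1, hw] at hpv
  field_simp at hpv
  linear_combination hpv

section polyid
open Polynomial

lemma poly_pv_aux (K : Type*) [Field K] [Algebra ℝ[X] K] [IsFractionRing ℝ[X] K]
    (N n : ℕ) (μ : ℝ) (hn : n + 1 ≤ N) (f g U V : ℝ[X]) (hf : f = pLag N (μ+1))
    (hg : g = pLag (N-1) (μ + 1)) (hU : U = htau g n * htau f (n+1))
    (hV : V = htau f n * htau g (n+1)) (m B : ℝ) (hm : m = N - n) (hB : B = N + n + 1 + μ) :
    2*U*(U-V)*X^2*((derivative (derivative U) * V - U * derivative (derivative V))*V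
        - 2*(derivative U * V - U * derivative V) * derivative V)
      = (3*U-V)*X^2*(derivative U * V - U * derivative V)^2
      - 2*U*(U-V)*X*(derivative U * V - U * derivative V)*V
      + (U-V)^3*((C m)^2*U^2-(C B)^2*V^2) + 2*(C μ)*X*U^2*(U-V)*V^2
      - X^2*U^2*(U+V)*V^2 := by
  have inj := IsFractionRing.injective ℝ[X] K
  obtain ⟨D, hD⟩ := exists_frac_deriv K
  set φ := algebraMap ℝ[X] K with hφ
  set θ : Derivation ℤ K K := (φ X) • D with hθ
  have hθp : ∀ p, θ (φ p) = φ X * φ (derivative p) := by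
    intro p
    rw [hθ, Derivation.smul_apply, hD, smul_eq_mul]
  have hz : θ (φ X) = φ X := by rw [hθp]; simp
  have hz0 : φ X ≠ 0 := (map_ne_zero_iff _ inj).mpr X_ne_zero
  have hC : ∀ c : ℝ, θ (φ (C c)) = 0 := by intro c; rw [hθp]; simp
  obtain ⟨f0, fd⟩ := pLag_natDegree N (μ+1)
  obtain ⟨g0, gd⟩ := pLag_natDegree (N-1) (μ+1)
  rw [← hf] at f0 fd
  rw [← hg] at g0 gd
  have hF : ∀ j ≤ n + 1, htau f j ≠ 0 := fun j hj => (htau_degree f f0 N fd j (by omega)).1.1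
  have hG : ∀ j ≤ n + 1, htau g j ≠ 0 := by
    intro j hj
    rcases Nat.eq_zero_or_pos j with rfl | h
    · rw [htau_zero]; exact one_ne_zero
    · obtain ⟨i, rfl⟩ : ∃ i, j = i + 1 := ⟨j - 1, by omega⟩
      exact (htau_degree g g0 (N-1) gd i (by omega)).2.1
  have hFG : ∀ j ≤ n, htau f (j+1) * htau g j ≠ htau f j * htau g (j+1) := by
    intro j hj h
    obtain ⟨⟨a1, a2⟩, b1, b2⟩ := htau_degree f f0 N fd j (by omega)
    obtain ⟨⟨c1, c2⟩, d1, d2⟩ := htau_degree g g0 (N-1) gd j (by omega)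
    have := congrArg natDegree h
    rw [natDegree_mul b1 c1, natDegree_mul a1 d1, a2, b2, c2, d2] at this
    obtain ⟨k, rfl⟩ : ∃ k, N = j + 1 + k := ⟨N - (j+1), by omega⟩
    have e1 : j + 1 + k - j = k + 1 := by omega
    have e2 : j + 1 + k - 1 + 1 - j = k + 1 := by omega
    have e3 : j + 1 + k + 1 - j = k + 2 := by omega
    have e4 : j + 1 + k - 1 - j = k := by omega
    rw [e1, e2, e3, e4] at this
    nlinarith
  have hT : ∀ p : ℝ[X], ∀ j, htau p j ≠ 0 → (φ X)^2 * (φ (htau p (j+2)) * φ (htau p j)) =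
      φ (htau p (j+1)) * (θ (θ (φ (htau p (j+1)))) - θ (φ (htau p (j+1))))
        - (θ (φ (htau p (j+1))))^2 := by
    intro p j hj
    have t := congrArg φ (htau_toda p j hj)
    simp only [map_mul, map_sub, map_pow] at t
    rw [hθp, Derivation.leibniz, hz, hθp, t]
    simp only [smul_eq_mul]
    ring
  have r1 : X * derivative f = C (N : ℝ) * f - C ((N : ℝ) + (μ + 1)) * g := by
    obtain ⟨M, rfl⟩ : ∃ M, N = M + 1 := ⟨N - 1, by omega⟩
    have := pLag_rel1 M (μ+1)
    rw [hf, hg]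
    simpa using this
  have r2 : derivative f = derivative g - g := by
    obtain ⟨M, rfl⟩ : ∃ M, N = M + 1 := ⟨N - 1, by omega⟩
    have := pLag_rel2 M (μ+1)
    rw [hf, hg]
    simpa using this
  obtain ⟨v, ρ, st⟩ := PVSt.chain (θ := θ) (z := φ X) (N := φ (C (N:ℝ))) (b := φ (C ((N:ℝ) + (μ+1))))
    (fun j => φ (htau f j)) (fun j => φ (htau g j)) hz hz0 (hC _) (hC _) n
    (fun j hj => (map_ne_zero_iff _ inj).mpr (hF j hj))
    (fun j hj => (map_ne_zero_iff _ inj).mpr (hG j hj))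
    (fun j hj h => hFG j hj (inj (by simpa only [map_mul] using h)))
    (by simp [htau_zero]) (by simp [htau_zero])
    (by
      simp only [htau_one]
      rw [hθp, ← map_mul, r1, map_sub, map_mul, map_mul])
    (by
      simp only [htau_one]
      have : X * derivative g = X * g + C (N : ℝ) * f - C ((N : ℝ) + (μ + 1)) * g := by
        linear_combination r1 - X * r2
      rw [hθp, ← map_mul, this, map_sub, map_add, map_mul, map_mul, map_mul])
    (fun j hj => hT f j (hF j (by omega))) (fun j hj => hT g j (hG j (by omega))) n le_rfl
  have q1 : φ (htau f n) ≠ 0 := (map_ne_zero_iff _ inj).mpr (hF n (by omega))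
  have q2 : φ (htau g n) ≠ 0 := (map_ne_zero_iff _ inj).mpr (hG n (by omega))
  have q3 : φ (htau f (n+1)) ≠ 0 := (map_ne_zero_iff _ inj).mpr (hF (n+1) (by omega))
  have q4 : φ (htau g (n+1)) ≠ 0 := (map_ne_zero_iff _ inj).mpr (hG (n+1) (by omega))
  have hw : φ U / φ V = (φ (htau f (n+1)) / φ (htau f n)) / (φ (htau g (n+1)) / φ (htau g n)) := by
    rw [hU, hV, map_mul, map_mul]
    field_simp
  have pv := st.pv hz hw
  have hVK : φ V ≠ 0 := by rw [hV, map_mul]; exact mul_ne_zero q1 q4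
  have em : φ (C (N:ℝ)) - (n : K) = φ (C m) := by rw [hm]; simp
  have eB : φ (C ((N:ℝ) + (μ+1))) + (n : K) = φ (C B) := by
    rw [hB]; simp; ring
  have eμ : φ (C ((N:ℝ) + (μ+1))) - φ (C (N:ℝ)) - 1 = φ (C μ) := by simp
  rw [em, eB, eμ] at pv
  have fin := pv_clear_den hz hVK (hθp U) (hθp V) (hθp _) (hθp _) rfl pv
  apply inj
  simp only [map_sub, map_mul, map_add, map_pow, map_ofNat]
  exact fin
end polyid


section final
open Polynomial

lemma flip_deriv (U V : ℝ[X]) (z : ℝ) (hV : V.eval (-z) ≠ 0) :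
    HasDerivAt (fun t => U.eval (-t) / V.eval (-t))
      (-((derivative U * V - U * derivative V).eval (-z)) / (V.eval (-z))^2) z := by
  have h : ∀ p : ℝ[X], HasDerivAt (fun t => p.eval (-t)) (-(derivative p).eval (-z)) z := by
    intro p
    have := (p.hasDerivAt (-z)).comp z (hasDerivAt_neg z)
    simpa [Function.comp_def] using this
  refine ((h U).div (h V) hV).congr_deriv ?_
  simp only [eval_sub, eval_mul]
  ring

lemma flip_deriv2 (U V : ℝ[X]) (z : ℝ) (hV : V.eval (-z) ≠ 0) :
    iteratedDeriv 2 (fun t => U.eval (-t) / V.eval (-t)) z =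
      (((derivative (derivative U) * V - U * derivative (derivative V))*V
        - 2*(derivative U * V - U * derivative V) * derivative V).eval (-z)) / (V.eval (-z))^3 := by
  rw [iteratedDeriv_succ, iteratedDeriv_one]
  have hev : deriv (fun t => U.eval (-t) / V.eval (-t)) =ᶠ[nhds z]
      fun t => (-(derivative U * V - U * derivative V)).eval (-t) / (V^2).eval (-t) := by
    have hc : Continuous fun t : ℝ => V.eval (-t) := V.continuous.comp continuous_neg
    filter_upwards [hc.continuousAt.eventually_ne hV] with t ht
    rw [(flip_deriv U V t ht).deriv, eval_neg, eval_pow]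
  rw [hev.deriv_eq, (flip_deriv _ (V^2) z (by simpa using hV)).deriv]
  simp only [derivative_neg, derivative_sub, derivative_mul, derivative_pow, eval_sub, eval_mul,
    eval_neg, eval_pow, eval_add, eval_C, eval_ofNat, pow_one, Nat.cast_ofNat, Nat.add_one_sub_one]
  field_simp
  ring
end final

/-- rational solutions of `P_V` in terms of `T̂_{m,n}^{(μ)}(z) = T_{m,n}^{(μ)}(-z)`. -/
theorem pv_rational_solution_hat (m n : ℕ) (hm : 1 ≤ m) (hn : 1 ≤ n) (μ : ℝ) (w wh : ℝ → ℝ)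
    (hw : w = fun z =>
      genLag ((m : ℤ) - 1) n μ z * genLag ((m : ℤ) - 1) (n + 1) μ z /
        (genLag (m : ℤ) n μ z * genLag ((m : ℤ) - 2) (n + 1) μ z))
    (hwh : wh = fun z =>
      genLag ((m : ℤ) - 1) n μ (-z) * genLag ((m : ℤ) - 1) (n + 1) μ (-z) /
        (genLag (m : ℤ) n μ (-z) * genLag ((m : ℤ) - 2) (n + 1) μ (-z))) :
    (∀ z : ℝ, z ≠ 0 →
        genLag (m : ℤ) n μ (-z) * genLag ((m : ℤ) - 2) (n + 1) μ (-z) ≠ 0 →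
        wh z ≠ 0 → wh z ≠ 1 →
        PV ((m : ℝ) ^ 2 / 2) (-((m : ℝ) + 2 * n + 1 + μ) ^ 2 / 2) (-μ) wh z)
      ∧ ∀ z : ℝ, wh z = w (-z) := by
  refine ⟨?_, fun z => by rw [hw, hwh]⟩
  set f := pLag (m + n) (μ + 1) with hf
  set g := pLag (m + n - 1) (μ + 1) with hg
  set U := htau g n * htau f (n+1) with hU
  set V := htau f n * htau g (n+1) with hV
  have hcast : ((m + n - 1 : ℕ) : ℤ) = (m : ℤ) + n - 1 := by omega
  have g1 : ∀ x, genLag ((m : ℤ) - 1) n μ x = (htau g n).eval x := fun x =>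
    genLag_eval _ n (m + n - 1) μ (by rw [hcast]; ring) x
  have g2 : ∀ x, genLag ((m : ℤ) - 2) (n + 1) μ x = (htau g (n+1)).eval x := fun x =>
    genLag_eval _ (n+1) (m + n - 1) μ (by rw [hcast]; push_cast; ring) x
  have f1 : ∀ x, genLag (m : ℤ) n μ x = (htau f n).eval x := fun x =>
    genLag_eval _ n (m + n) μ (by push_cast; ring) x
  have f2 : ∀ x, genLag ((m : ℤ) - 1) (n + 1) μ x = (htau f (n+1)).eval x := fun x =>
    genLag_eval _ (n+1) (m + n) μ (by push_cast; ring) x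
  have hwh' : wh = fun z => U.eval (-z) / V.eval (-z) := by
    rw [hwh]
    funext z
    rw [g1, g2, f1, f2, hU, hV, Polynomial.eval_mul, Polynomial.eval_mul]
  intro z hz hden h0 h1
  rw [f1, g2, ← Polynomial.eval_mul, ← hV] at hden
  have key := poly_pv_aux (FractionRing (Polynomial ℝ)) (m + n) n μ (by omega) f g U V hf hg hU hV
    m ((m : ℝ) + 2 * n + 1 + μ) (by push_cast; ring) (by push_cast; ring)
  have key2 := congrArg (Polynomial.eval (-z)) key
  have d1 := (flip_deriv U V z hden).deriv
  have d2 := flip_deriv2 U V z hden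
  rw [← hwh'] at d1 d2
  have d0 : wh z = U.eval (-z) / V.eval (-z) := by rw [hwh']
  unfold PV
  rw [d1, d2]
  clear d1 d2 key
  clear_value U V
  rw [d0] at h0 h1 ⊢
  simp only [Polynomial.eval_mul, Polynomial.eval_sub, Polynomial.eval_add, Polynomial.eval_pow,
    Polynomial.eval_C, Polynomial.eval_X, Polynomial.eval_ofNat] at key2 ⊢
  generalize U.eval (-z) = u at *
  generalize V.eval (-z) = v at *
  generalize (Polynomial.derivative U).eval (-z) = u1 at *
  generalize (Polynomial.derivative V).eval (-z) = v1 at *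
  generalize (Polynomial.derivative (Polynomial.derivative U)).eval (-z) = u2 at *
  generalize (Polynomial.derivative (Polynomial.derivative V)).eval (-z) = v2 at *
  have hu : u ≠ 0 := fun h => h0 (by rw [h, zero_div])
  have huv : u - v ≠ 0 := fun h => h1 (by rw [sub_eq_zero.mp h, div_self hden])
  have e1 : u / v - 1 = (u - v) / v := by field_simp
  rw [e1]
  field_simp
  linear_combination key2
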